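/- Let X = [x₁,…,x_n] ∈ ℝ^{d×n}, d ≥ K ≥ 1, and let {(U^k, S^k)} be generated by the non-greedy algorithm: S^k = sgn(XᵀU^k) entrywise and U^{k+1} a U-factor of a polar decomposition of XS^k. If for some index k one has ⟨XᵀU^{k+1}, S^{k+1}⟩ = ⟨XᵀU^{k+1}, S^k⟩, then U^{k+1} is a FOC point: there exists S* with S*_{ij} = sgn(x_iᵀu_j^{k+1}) whenever x_iᵀu_j^{k+1} ≠ 0 and S*_{ij} ∈ [−1,1] otherwise, such that U^{k+1} is a U-factor of a polar decomposition of XS*. -/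

import Mathlib

/-!
The witness is `S k` itself: `U (k + 1)` is a U-factor of `X * S k` by construction, so only the
sign condition needs an argument. With `V = Xᵀ * U (k + 1)`, the pairing of `V` with its own sign
matrix is `∑ |V i j|`, which bounds entry by entry the pairing of `V` with any matrix whose entries
lie in `[-1, 1]`. Equality of the two pairings therefore forces equality in every entry, which
determines the entries of `S k` wherever `V` does not vanish (`isSignSubgrad_of_frobInner_eq`).
-/

open Matrix

noncomputable section

/-- The Stiefel manifold St(m,n): real m×n matrices with orthonormal columns. -/
def Stiefel (m n : ℕ) : Set (Matrix (Fin m) (Fin n) ℝ) := {U | Uᵀ * U = 1}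

/-- Frobenius inner product ⟨A,B⟩ = trace(AᵀB). -/
def frobInner {m n : ℕ} (A B : Matrix (Fin m) (Fin n) ℝ) : ℝ := (Aᵀ * B).trace

/-- Frobenius norm. -/
def frobNorm {m n : ℕ} (A : Matrix (Fin m) (Fin n) ℝ) : ℝ := Real.sqrt (frobInner A A)

/-- Entrywise L1 norm of a matrix. -/
def entryL1 {m n : ℕ} (A : Matrix (Fin m) (Fin n) ℝ) : ℝ := ∑ i, ∑ j, |A i j|

/-- Entrywise sign of a matrix. -/
def sgnMatrix {m n : ℕ} (A : Matrix (Fin m) (Fin n) ℝ) : Matrix (Fin m) (Fin n) ℝ :=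
  Matrix.of fun i j => Real.sign (A i j)

/-- `U` is a U-factor of a polar decomposition of `C`: U ∈ St(m,n) and C = U*H with H
symmetric positive semidefinite. -/
def IsUFactor {m n : ℕ} (U C : Matrix (Fin m) (Fin n) ℝ) : Prop :=
  U ∈ Stiefel m n ∧ ∃ H : Matrix (Fin n) (Fin n) ℝ, H.PosSemidef ∧ C = U * H

/-- `S` is an entrywise subgradient sign matrix for `V`: S_ij = sgn(V_ij) whenever
V_ij ≠ 0 and S_ij ∈ [-1,1] otherwise. -/
def IsSignSubgrad {m n : ℕ} (S V : Matrix (Fin m) (Fin n) ℝ) : Prop :=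
  ∀ i j, (V i j ≠ 0 → S i j = Real.sign (V i j)) ∧ S i j ∈ Set.Icc (-1 : ℝ) 1

lemma frobInner_eq_sum {m n : ℕ} (A B : Matrix (Fin m) (Fin n) ℝ) :
    frobInner A B = ∑ j, ∑ i, A i j * B i j := by
  simp [frobInner, Matrix.trace, Matrix.mul_apply]

lemma sign_mem_Icc (x : ℝ) : Real.sign x ∈ Set.Icc (-1 : ℝ) 1 := by
  rcases Real.sign_apply_eq x with h | h | h <;> rw [h] <;> norm_num

lemma mul_le_mul_sign {v s : ℝ} (hs : s ∈ Set.Icc (-1 : ℝ) 1) : v * s ≤ v * Real.sign v := by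
  obtain ⟨h1, h2⟩ := hs
  rcases lt_trichotomy v 0 with h | h | h
  · rw [Real.sign_of_neg h]; nlinarith
  · simp [h]
  · rw [Real.sign_of_pos h]; nlinarith

/-- Equality case of the `ℓ¹`–`ℓ^∞` duality bound: a matrix with entries in `[-1, 1]` whose pairing
with `V` is the maximal one agrees with the sign of `V` on the support of `V`. -/
lemma isSignSubgrad_of_frobInner_eq {m n : ℕ} {V S : Matrix (Fin m) (Fin n) ℝ}
    (hS : ∀ i j, S i j ∈ Set.Icc (-1 : ℝ) 1)
    (h : frobInner V (sgnMatrix V) = frobInner V S) : IsSignSubgrad S V := by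
  intro i j
  refine ⟨fun hV => ?_, hS i j⟩
  rw [frobInner_eq_sum, frobInner_eq_sum] at h
  have hle : ∀ i j, V i j * S i j ≤ V i j * sgnMatrix V i j := fun i j => mul_le_mul_sign (hS i j)
  have hcol := (Finset.sum_eq_sum_iff_of_le
    fun j _ => Finset.sum_le_sum fun i _ => hle i j).1 h.symm j (Finset.mem_univ j)
  have hentry := (Finset.sum_eq_sum_iff_of_le fun i _ => hle i j).1 hcol i (Finset.mem_univ i)
  exact mul_left_cancel₀ hV hentry

/-- Corollary 3.9 — whenever ⟨XᵀU^{k+1},S^{k+1}⟩ = ⟨XᵀU^{k+1},S^k⟩ along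
the non-greedy algorithm, U^{k+1} is a FOC point. -/
theorem nga_objective_equality_gives_FOC {d n K : ℕ} (hK : 1 ≤ K) (hKd : K ≤ d)
    (X : Matrix (Fin d) (Fin n) ℝ)
    (U : ℕ → Matrix (Fin d) (Fin K) ℝ) (S : ℕ → Matrix (Fin n) (Fin K) ℝ)
    (hU0 : U 0 ∈ Stiefel d K)
    (hS : ∀ k, S k = sgnMatrix (Xᵀ * U k))
    (hU : ∀ k, IsUFactor (U (k + 1)) (X * S k))
    (k : ℕ)
    (heq : frobInner (Xᵀ * U (k + 1)) (S (k + 1)) = frobInner (Xᵀ * U (k + 1)) (S k)) :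
    ∃ Sstar : Matrix (Fin n) (Fin K) ℝ,
      IsSignSubgrad Sstar (Xᵀ * U (k + 1)) ∧ IsUFactor (U (k + 1)) (X * Sstar) := by
  refine ⟨S k, isSignSubgrad_of_frobInner_eq (fun i j => ?_) ?_, hU k⟩
  · rw [hS k]
    exact sign_mem_Icc _
  · rw [← hS (k + 1)]
    exact heq
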